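/- Let f ∈ C²((0,∞)) be a solution of the profile equation f'' + ((N−1)/r + r/2)f' + f/α + |f|^α f = 0 on (0,∞) such that r^{2/α} f(r) → β^{1/α} as r→0, and define U(t,x) = t^{−1/α} f(|x|/√t) for t>0, x∈ℝ^N∖{0}. Then there exists a constant C such that | |x|^{2/α} U(t,x) − β^{1/α} | ≤ C (|x|/(|x|+√t))^ρ for all t > 0 and all x ≠ 0. -/

import Mathlib

open Filter

noncomputable section

/-- `N`-dimensional Euclidean space. -/
abbrev Euc (N : ℕ) := EuclideanSpace ℝ (Fin N)

/-!
In the Emden–Fowler variables `w = r ^ (2 / α) * f`, `q = r * w'`, the profile equation becomes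
`r * w' = q`, `r * q' = (A - r ^ 2 / 2) * q - Φ'(w)` with `A = 4 / α - (N - 2)` and
`Φ(w) = |w| ^ (α + 2) / (α + 2) - β * w ^ 2 / 2`.

Near `r = 0`, linearising at the equilibrium `L = β ^ (1 / α)` gives an Euler equation whose
exponents are the roots of `X ^ 2 - A * X + α * β`. The condition `α < α₀` makes these roots real,
distinct and positive, and `ρ` is the smaller one. A quadratic form `V` that
diagonalises the Euler equation satisfies `r * V' ≥ (2 * ρ - ε(r)) * V`, where the error `ε` is
controlled by a power of `r` and by `V` itself. A first Gronwall argument, using only `ε → 0`, gives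
some power decay of `V`; hence `ε` is integrable against `dr / r`, and a second one gives the sharp
decay `V = O(r ^ (2 * ρ))`.

Near `r = ∞` the term `-r ^ 2 / 2 * q` is a damping, so `q ^ 2 / 2 + Φ(w)` decreases, and `w` is
bounded because `Φ` is coercive.
-/

open Asymptotics Bornology Set Topology

section SingularGronwall

variable {V V' ε : ℝ → ℝ} {a b c μ ν r₀ : ℝ}

lemma monotoneOn_mul_rpow_neg_mul_exp (hμ : μ ≠ 0)
    (hV : ∀ r ∈ Ioc 0 r₀, HasDerivAt V (V' r) r)
    (hV' : ∀ r ∈ Ioc 0 r₀, (a - c * r ^ μ) * V r ≤ r * V' r) :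
    MonotoneOn (fun r ↦ V r * (r ^ (-a) * Real.exp (c * r ^ μ / μ))) (Ioc 0 r₀) := by
  have hderiv : ∀ r ∈ Ioc 0 r₀, HasDerivAt (fun r ↦ V r * (r ^ (-a) * Real.exp (c * r ^ μ / μ)))
      (r ^ (-a) * Real.exp (c * r ^ μ / μ) / r * (r * V' r - (a - c * r ^ μ) * V r)) r := by
    intro r hr
    have hr0 : r ≠ 0 := hr.1.ne'
    have hpow (s : ℝ) : HasDerivAt (fun r : ℝ ↦ r ^ s) (s * r ^ (s - 1)) r :=
      Real.hasDerivAt_rpow_const (Or.inl hr0)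
    refine ((hV r hr).mul ((hpow (-a)).mul
      (((hpow μ).const_mul c).div_const μ).exp)).congr_deriv ?_
    rw [Pi.mul_apply, Real.rpow_sub_one hr0, Real.rpow_sub_one hr0]
    field_simp
    ring
  refine monotoneOn_of_hasDerivWithinAt_nonneg (convex_Ioc 0 r₀)
    (fun r hr ↦ (hderiv r hr).continuousAt.continuousWithinAt)
    (fun r hr ↦ (hderiv r (interior_subset hr)).hasDerivWithinAt) fun r hr ↦ ?_
  have hr' := interior_subset hr
  have hr0 : 0 < r := hr'.1
  exact mul_nonneg (by positivity) (sub_nonneg.2 (hV' r hr'))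

theorem isBigO_rpow_of_mul_deriv_ge (hμ : 0 < μ) (hε : ε =O[𝓝[>] 0] fun r ↦ r ^ μ)
    (hV₀ : ∀ᶠ r in 𝓝[>] 0, 0 ≤ V r) (hV : ∀ᶠ r in 𝓝[>] 0, HasDerivAt V (V' r) r)
    (hV' : ∀ᶠ r in 𝓝[>] 0, (a - ε r) * V r ≤ r * V' r) :
    V =O[𝓝[>] 0] fun r ↦ r ^ a := by
  obtain ⟨c, hc, hεc⟩ := hε.exists_nonneg
  obtain ⟨r₀, hr₀, hsub⟩ := mem_nhdsGT_iff_exists_Ioc_subset.1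
    (hεc.bound.and (hV₀.and (hV.and hV')))
  have hmono : MonotoneOn (fun r ↦ V r * (r ^ (-a) * Real.exp (c * r ^ μ / μ))) (Ioc 0 r₀) := by
    refine monotoneOn_mul_rpow_neg_mul_exp hμ.ne' (fun r hr ↦ (hsub hr).2.2.1) fun r hr ↦ ?_
    obtain ⟨hεr, hVr, -, hV'r⟩ := hsub hr
    rw [Real.norm_of_nonneg (Real.rpow_nonneg hr.1.le μ)] at hεr
    have hεr' : ε r ≤ c * r ^ μ := (le_abs_self _).trans hεr
    exact (mul_le_mul_of_nonneg_right (by linarith) hVr).trans hV'r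
  refine .of_bound (V r₀ * (r₀ ^ (-a) * Real.exp (c * r₀ ^ μ / μ))) ?_
  filter_upwards [Ioc_mem_nhdsGT hr₀] with r hr
  have hr0 : 0 < r := hr.1
  have hVr : 0 ≤ V r := (hsub hr).2.1
  rw [Real.norm_of_nonneg hVr, Real.norm_of_nonneg (by positivity)]
  calc V r = V r * (r ^ (-a) * 1) * r ^ a := by
        rw [mul_one, mul_assoc, ← Real.rpow_add hr0, neg_add_cancel, Real.rpow_zero, mul_one]
    _ ≤ V r * (r ^ (-a) * Real.exp (c * r ^ μ / μ)) * r ^ a := by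
        gcongr
        exact Real.one_le_exp (by positivity)
    _ ≤ _ := mul_le_mul_of_nonneg_right (hmono hr (right_mem_Ioc.2 hr₀) hr.2) (by positivity)

lemma isBigO_rpow_of_mul_deriv_ge_of_lt (hb : b < a) (hε : Tendsto ε (𝓝[>] 0) (𝓝 0))
    (hV₀ : ∀ᶠ r in 𝓝[>] 0, 0 ≤ V r) (hV : ∀ᶠ r in 𝓝[>] 0, HasDerivAt V (V' r) r)
    (hV' : ∀ᶠ r in 𝓝[>] 0, (a - ε r) * V r ≤ r * V' r) :
    V =O[𝓝[>] 0] fun r ↦ r ^ b := by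
  refine isBigO_rpow_of_mul_deriv_ge (ε := 0) one_pos (isBigO_zero _ _) hV₀ hV ?_
  filter_upwards [hV₀, hV', hε.eventually_lt_const (sub_pos.2 hb)] with r hVr hV'r hεr
  refine (mul_le_mul_of_nonneg_right ?_ hVr).trans hV'r
  simp only [Pi.zero_apply]
  linarith

theorem isBigO_rpow_of_mul_deriv_ge_of_isBigO_add_rpow (ha : 0 < a) (hμ : 0 < μ) (hν : 0 < ν)
    (hε : Tendsto ε (𝓝[>] 0) (𝓝 0)) (hεV : ε =O[𝓝[>] 0] fun r ↦ r ^ μ + V r ^ ν)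
    (hV₀ : ∀ᶠ r in 𝓝[>] 0, 0 ≤ V r) (hV : ∀ᶠ r in 𝓝[>] 0, HasDerivAt V (V' r) r)
    (hV' : ∀ᶠ r in 𝓝[>] 0, (a - ε r) * V r ≤ r * V' r) :
    V =O[𝓝[>] 0] fun r ↦ r ^ a := by
  have hpow {s κ : ℝ} (hs : 0 < s) (hκ : κ ≤ s) :
      (fun r : ℝ ↦ r ^ s) =O[𝓝[>] 0] fun r ↦ r ^ κ :=
    (IsBigO.rpow_rpow_nhdsGE_zero_of_le hκ hs.ne').mono (nhdsWithin_mono _ Ioi_subset_Ici_self)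
  have hpos : ∀ᶠ r : ℝ in 𝓝[>] 0, 0 < r := self_mem_nhdsWithin
  have hVν : (fun r ↦ V r ^ ν) =O[𝓝[>] 0] fun r ↦ r ^ (a / 2 * ν) := by
    have hV_half := isBigO_rpow_of_mul_deriv_ge_of_lt (half_lt_self ha) hε hV₀ hV hV'
    refine (hV_half.rpow hν.le ?_).congr' .rfl ?_
    · filter_upwards [hpos] with r hr using Real.rpow_nonneg hr.le _
    · filter_upwards [hpos] with r hr using (Real.rpow_mul hr.le _ _).symm
  have hν' : 0 < a / 2 * ν := by positivity
  refine isBigO_rpow_of_mul_deriv_ge (lt_min hμ hν') (hεV.trans ?_) hV₀ hV hV'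
  exact (hpow hμ (min_le_left _ _)).add (hVν.trans (hpow hν' (min_le_right _ _)))

end SingularGronwall

section EulerEquation

/-- A quadratic form adapted to the Euler system `r * v' = p`,
`r * p' = (κ₁ + κ₂) * p - κ₁ * κ₂ * v`: the combinations `p - κ₂ * v` and `p - κ₁ * v` diagonalise
it, with exponents `κ₁` and `κ₂` respectively. -/
def eulerEnergy (κ₁ κ₂ v p : ℝ) : ℝ := (p - κ₂ * v) ^ 2 + (p - κ₁ * v) ^ 2

variable {κ₁ κ₂ : ℝ}

lemma eulerEnergy_nonneg (v p : ℝ) : 0 ≤ eulerEnergy κ₁ κ₂ v p :=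
  add_nonneg (sq_nonneg _) (sq_nonneg _)

lemma abs_add_abs_sq_le_two_mul_eulerEnergy (v p : ℝ) :
    (|p - κ₂ * v| + |p - κ₁ * v|) ^ 2 ≤ 2 * eulerEnergy κ₁ κ₂ v p := by
  simpa only [sq_abs] using! add_sq_le (a := |p - κ₂ * v|) (b := |p - κ₁ * v|)

lemma abs_add_abs_le_mul_abs_add_abs (hκ₁ : 0 ≤ κ₁) (hκ : κ₁ < κ₂) (v p : ℝ) :
    |v| + |p| ≤ (1 + κ₂) / (κ₂ - κ₁) * (|p - κ₂ * v| + |p - κ₁ * v|) := by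
  have hgap : 0 < κ₂ - κ₁ := sub_pos.2 hκ
  have hv : (κ₂ - κ₁) * |v| ≤ |p - κ₂ * v| + |p - κ₁ * v| := by
    rw [← abs_of_pos hgap, ← abs_mul, add_comm |p - κ₂ * v|]
    calc |(κ₂ - κ₁) * v| = |(p - κ₁ * v) - (p - κ₂ * v)| := by ring_nf
      _ ≤ _ := abs_sub _ _
  have hp : (κ₂ - κ₁) * |p| ≤ κ₂ * (|p - κ₂ * v| + |p - κ₁ * v|) := by
    calc (κ₂ - κ₁) * |p| = |κ₂ * (p - κ₁ * v) - κ₁ * (p - κ₂ * v)| := by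
          nth_rw 1 [← abs_of_pos hgap]
          rw [← abs_mul]
          ring_nf
      _ ≤ κ₂ * |p - κ₁ * v| + κ₁ * |p - κ₂ * v| := by
          simpa only [abs_mul, abs_of_nonneg hκ₁, abs_of_nonneg (hκ₁.trans hκ.le)] using
            abs_sub (κ₂ * (p - κ₁ * v)) (κ₁ * (p - κ₂ * v))
      _ ≤ _ := by nlinarith [abs_nonneg (p - κ₂ * v)]
  rw [div_mul_eq_mul_div, le_div_iff₀ hgap]
  linarith

lemma abs_le_mul_eulerEnergy_rpow (hκ₁ : 0 ≤ κ₁) (hκ : κ₁ < κ₂) (v p : ℝ) :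
    |v| ≤ (1 + κ₂) / (κ₂ - κ₁) * √2 * eulerEnergy κ₁ κ₂ v p ^ (1 / 2 : ℝ) := by
  have hκ₂ : 0 < (1 + κ₂) / (κ₂ - κ₁) := div_pos (by linarith) (sub_pos.2 hκ)
  rw [← Real.sqrt_eq_rpow, mul_assoc, ← Real.sqrt_mul zero_le_two]
  calc |v| ≤ |v| + |p| := le_add_of_nonneg_right (abs_nonneg p)
    _ ≤ _ := abs_add_abs_le_mul_abs_add_abs hκ₁ hκ v p
    _ ≤ _ := by
      gcongr
      exact Real.le_sqrt_of_sq_le (abs_add_abs_sq_le_two_mul_eulerEnergy v p)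

lemma sub_mul_eulerEnergy_le (hκ₁ : 0 ≤ κ₁) (hκ : κ₁ < κ₂) {v p h δ : ℝ}
    (hδ : 0 ≤ δ) (hh : |h| ≤ δ * (|v| + |p|)) :
    (2 * κ₁ - 4 * ((1 + κ₂) / (κ₂ - κ₁)) * δ) * eulerEnergy κ₁ κ₂ v p ≤
      2 * κ₁ * (p - κ₂ * v) ^ 2 + 2 * κ₂ * (p - κ₁ * v) ^ 2
        + 2 * h * ((p - κ₂ * v) + (p - κ₁ * v)) := by
  have hM : 0 < (1 + κ₂) / (κ₂ - κ₁) := div_pos (by linarith) (sub_pos.2 hκ)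
  set M := (1 + κ₂) / (κ₂ - κ₁)
  set S := |p - κ₂ * v| + |p - κ₁ * v|
  have hcross : |h * ((p - κ₂ * v) + (p - κ₁ * v))| ≤ 2 * M * δ * eulerEnergy κ₁ κ₂ v p := by
    calc |h * ((p - κ₂ * v) + (p - κ₁ * v))|
        ≤ δ * (M * S) * S := by
          rw [abs_mul]
          gcongr
          · exact hh.trans (by gcongr; exact abs_add_abs_le_mul_abs_add_abs hκ₁ hκ v p)
          · exact abs_add_le _ _
      _ = δ * M * S ^ 2 := by ring
      _ ≤ δ * M * (2 * eulerEnergy κ₁ κ₂ v p) := by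
          gcongr
          exact abs_add_abs_sq_le_two_mul_eulerEnergy v p
      _ = 2 * M * δ * eulerEnergy κ₁ κ₂ v p := by ring
  have hdiag : 2 * κ₁ * eulerEnergy κ₁ κ₂ v p ≤
      2 * κ₁ * (p - κ₂ * v) ^ 2 + 2 * κ₂ * (p - κ₁ * v) ^ 2 := by
    rw [eulerEnergy]
    nlinarith [sq_nonneg (p - κ₁ * v)]
  linarith [neg_le_of_abs_le hcross]

lemma hasDerivAt_eulerEnergy {v p h : ℝ → ℝ} {r : ℝ} (hv : HasDerivAt v (p r / r) r)
    (hp : HasDerivAt p (((κ₁ + κ₂) * p r - κ₁ * κ₂ * v r + h r) / r) r) :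
    HasDerivAt (fun r ↦ eulerEnergy κ₁ κ₂ (v r) (p r))
      ((2 * κ₁ * (p r - κ₂ * v r) ^ 2 + 2 * κ₂ * (p r - κ₁ * v r) ^ 2
        + 2 * h r * ((p r - κ₂ * v r) + (p r - κ₁ * v r))) / r) r := by
  refine (((hp.sub (hv.const_mul κ₂)).pow 2).add
    ((hp.sub (hv.const_mul κ₁)).pow 2)).congr_deriv ?_
  simp only [Pi.sub_apply]
  push_cast
  ring

theorem isBigO_rpow_of_perturbed_euler {v p h : ℝ → ℝ} {μ : ℝ}
    (hκ₁ : 0 < κ₁) (hκ : κ₁ < κ₂) (hμ : 0 < μ)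
    (hv : ∀ᶠ r in 𝓝[>] 0, HasDerivAt v (p r / r) r)
    (hp : ∀ᶠ r in 𝓝[>] 0, HasDerivAt p (((κ₁ + κ₂) * p r - κ₁ * κ₂ * v r + h r) / r) r)
    (hh : h =O[𝓝[>] 0] fun r ↦ (r ^ μ + |v r|) * (|v r| + |p r|))
    (hv₀ : Tendsto v (𝓝[>] 0) (𝓝 0)) :
    v =O[𝓝[>] 0] fun r ↦ r ^ κ₁ := by
  obtain ⟨K, hK, hhK⟩ := hh.exists_nonneg
  set M := (1 + κ₂) / (κ₂ - κ₁)
  set V : ℝ → ℝ := fun r ↦ eulerEnergy κ₁ κ₂ (v r) (p r)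
  set ε : ℝ → ℝ := fun r ↦ 4 * M * (K * (r ^ μ + |v r|))
  have hpos : ∀ᶠ r : ℝ in 𝓝[>] 0, 0 < r := self_mem_nhdsWithin
  have hvV : v =O[𝓝[>] 0] fun r ↦ V r ^ (1 / 2 : ℝ) := by
    refine .of_bound (M * √2) (.of_forall fun r ↦ ?_)
    rw [Real.norm_of_nonneg (Real.rpow_nonneg (eulerEnergy_nonneg _ _) _)]
    exact abs_le_mul_eulerEnergy_rpow hκ₁.le hκ _ _
  have hε : Tendsto ε (𝓝[>] 0) (𝓝 0) := by
    have hr : Tendsto (fun r : ℝ ↦ r ^ μ) (𝓝[>] 0) (𝓝 0) := by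
      simpa only [Real.zero_rpow hμ.ne'] using
        (Real.continuousAt_rpow_const 0 μ (Or.inr hμ.le)).mono_left nhdsWithin_le_nhds
    simpa using ((hr.add hv₀.abs).const_mul K).const_mul (4 * M)
  have hεV : ε =O[𝓝[>] 0] fun r ↦ r ^ μ + V r ^ (1 / 2 : ℝ) := by
    refine ((((isBigO_refl _ _).add_add hvV.abs_left).congr' .rfl ?_).const_mul_left
      K).const_mul_left _
    filter_upwards [hpos] with r hr
    rw [Real.norm_of_nonneg (Real.rpow_nonneg hr.le _),
      Real.norm_of_nonneg (Real.rpow_nonneg (eulerEnergy_nonneg _ _) _)]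
  have hV : V =O[𝓝[>] 0] fun r ↦ r ^ (2 * κ₁) := by
    refine isBigO_rpow_of_mul_deriv_ge_of_isBigO_add_rpow (by positivity) hμ one_half_pos hε hεV
      (.of_forall fun r ↦ eulerEnergy_nonneg _ _)
      ((hv.and hp).mono fun r h ↦ hasDerivAt_eulerEnergy h.1 h.2) ?_
    filter_upwards [hpos, hhK.bound] with r hr hhr
    rw [mul_div_cancel₀ _ hr.ne']
    have hδ : 0 ≤ (r ^ μ + |v r|) * (|v r| + |p r|) := by positivity
    rw [Real.norm_of_nonneg hδ, ← mul_assoc] at hhr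
    exact sub_mul_eulerEnergy_le hκ₁.le hκ (by positivity) hhr
  refine hvV.trans ((hV.rpow one_half_pos.le ?_).congr' .rfl ?_)
  · filter_upwards [hpos] with r hr using Real.rpow_nonneg hr.le _
  · filter_upwards [hpos] with r hr
    rw [← Real.rpow_mul hr.le]
    ring_nf

end EulerEquation

section DampedSystem

variable {Φ Φ' D w q : ℝ → ℝ}

theorem isBigO_one_atTop_of_damped (hΦ : ∀ x, HasDerivAt Φ (Φ' x) x)
    (hΦ_top : Tendsto Φ (cobounded ℝ) atTop) (hD : ∀ᶠ r in atTop, D r ≤ 0)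
    (hw : ∀ᶠ r in atTop, HasDerivAt w (q r / r) r)
    (hq : ∀ᶠ r in atTop, HasDerivAt q ((D r * q r - Φ' (w r)) / r) r) :
    w =O[atTop] fun _ ↦ (1 : ℝ) := by
  obtain ⟨R, hR⟩ := eventually_atTop.1 ((eventually_ge_atTop 0).and (hD.and (hw.and hq)))
  set E : ℝ → ℝ := fun r ↦ q r ^ 2 / 2 + Φ (w r)
  have hE : ∀ r ∈ Ici R, HasDerivAt E (D r * q r ^ 2 / r) r := by
    intro r hr
    obtain ⟨-, -, hwr, hqr⟩ := hR r hr
    refine (((hqr.pow 2).div_const 2).add ((hΦ (w r)).comp r hwr)).congr_deriv ?_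
    push_cast
    ring
  have hanti : AntitoneOn E (Ici R) := by
    refine antitoneOn_of_hasDerivWithinAt_nonpos (convex_Ici R)
      (fun r hr ↦ (hE r hr).continuousAt.continuousWithinAt)
      (fun r hr ↦ (hE r (interior_subset hr)).hasDerivWithinAt) fun r hr ↦ ?_
    obtain ⟨hr0, hDr, -⟩ := hR r (interior_subset hr)
    exact div_nonpos_of_nonpos_of_nonneg (mul_nonpos_of_nonpos_of_nonneg hDr (sq_nonneg _)) hr0
  have hsublevel : IsBounded {x | Φ x ≤ E R} := by
    rw [isBounded_def]
    filter_upwards [hΦ_top.eventually_gt_atTop (E R)] with x hx using not_le.2 hx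
  obtain ⟨C, hC⟩ := hsublevel.exists_norm_le
  refine .of_bound C ?_
  filter_upwards [eventually_ge_atTop R] with r hr
  rw [norm_one, mul_one]
  refine hC (w r) (le_trans ?_ (hanti self_mem_Ici hr hr))
  exact le_add_of_nonneg_left (by positivity)

end DampedSystem

section GlobalBounds

lemma exists_forall_pos_norm_le_mul_norm {E F : Type*} [NormedAddCommGroup E]
    [NormedAddCommGroup F] {u : ℝ → E} {g : ℝ → F} (hu : ContinuousOn u (Ioi 0))
    (hg : ContinuousOn g (Ioi 0)) (hg₀ : ∀ r > 0, g r ≠ 0) (h₀ : u =O[𝓝[>] 0] g)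
    (h_top : u =O[atTop] g) :
    ∃ C, ∀ r > 0, ‖u r‖ ≤ C * ‖g r‖ := by
  obtain ⟨C₀, hC₀⟩ := h₀.bound
  obtain ⟨r₀, hr₀, hsub⟩ := mem_nhdsGT_iff_exists_Ioc_subset.1 hC₀
  obtain ⟨C₁, hC₁⟩ := h_top.bound
  obtain ⟨R, hR⟩ := eventually_atTop.1 hC₁
  have hpos : Icc r₀ R ⊆ Ioi 0 := fun r hr ↦ hr₀.trans_le hr.1
  have hmid : u =O[𝓟 (Icc r₀ R)] g :=
    ((hu.mono hpos).isBigO_principal isCompact_Icc (c := (1 : ℝ)) (by norm_num)).trans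
      ((hg.mono hpos).isBigO_rev_principal isCompact_Icc (fun r hr ↦ hg₀ r (hpos hr)) 1)
  have hunion : u =O[𝓟 (Ioc 0 r₀ ∪ Icc r₀ R ∪ Ici R)] g := by
    rw [← sup_principal, ← sup_principal]
    exact ((isBigO_principal.2 ⟨C₀, hsub⟩).sup hmid).sup (isBigO_principal.2 ⟨C₁, hR⟩)
  obtain ⟨C, hC⟩ := isBigO_principal.1 hunion
  refine ⟨C, fun r hr ↦ hC r ?_⟩
  rcases le_total r r₀ with h | h
  · exact .inl (.inl ⟨hr, h⟩)
  · rcases le_total r R with h' | h'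
    exacts [.inl (.inr ⟨h, h'⟩), .inr h']

lemma isBigO_rpow_div_add_one_rpow_nhdsGT (ρ : ℝ) :
    (fun r : ℝ ↦ r ^ ρ) =O[𝓝[>] 0] fun r ↦ (r / (r + 1)) ^ ρ := by
  have hcont : ContinuousAt (fun r : ℝ ↦ (r + 1) ^ ρ) 0 :=
    (continuousAt_id.add continuousAt_const).rpow_const (.inl (by simp))
  have hbdd : (fun r : ℝ ↦ (r + 1) ^ ρ) =O[𝓝[>] 0] fun _ ↦ (1 : ℝ) :=
    (hcont.mono_left nhdsWithin_le_nhds).isBigO_one ℝ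
  refine ((isBigO_refl (fun r : ℝ ↦ (r / (r + 1)) ^ ρ) _).mul hbdd).congr' ?_ ?_
  · filter_upwards [self_mem_nhdsWithin] with r hr
    have hr0 : 0 < r := hr
    rw [← Real.mul_rpow (by positivity) (by positivity), div_mul_cancel₀ _ (by positivity)]
  · exact .of_forall fun r ↦ mul_one _

lemma isBigO_one_div_add_one_rpow_atTop (ρ : ℝ) :
    (fun _ ↦ (1 : ℝ)) =O[atTop] fun r : ℝ ↦ (r / (r + 1)) ^ ρ := by
  have hinv : Tendsto (fun r : ℝ ↦ 1 - (r + 1)⁻¹) atTop (𝓝 1) := by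
    simpa using (tendsto_inv_atTop_zero.comp
      (tendsto_atTop_add_const_right atTop (1 : ℝ) tendsto_id)).const_sub 1
  have hdiv : Tendsto (fun r : ℝ ↦ r / (r + 1)) atTop (𝓝 1) := by
    refine hinv.congr' ?_
    filter_upwards [eventually_gt_atTop 0] with r hr
    field_simp
    ring
  have hrpow : Tendsto (fun r : ℝ ↦ (r / (r + 1)) ^ ρ) atTop (𝓝 1) := by
    simpa using hdiv.rpow_const (p := ρ) (.inl one_ne_zero)
  exact ((isEquivalent_const_iff_tendsto one_ne_zero).2 hrpow).symm.isBigO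

lemma exists_forall_pos_norm_le_mul_div_add_one_rpow {E : Type*} [NormedAddCommGroup E]
    {u : ℝ → E} {ρ : ℝ} (hu : ContinuousOn u (Ioi 0))
    (h₀ : u =O[𝓝[>] 0] fun r ↦ r ^ ρ) (h_top : u =O[atTop] fun _ ↦ (1 : ℝ)) :
    ∃ C, ∀ r > 0, ‖u r‖ ≤ C * (r / (r + 1)) ^ ρ := by
  have hpos : ∀ r > (0 : ℝ), 0 < (r / (r + 1)) ^ ρ := fun r hr ↦ by positivity
  have hcont : ContinuousOn (fun r : ℝ ↦ (r / (r + 1)) ^ ρ) (Ioi 0) := by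
    intro r hr
    have hr0 : 0 < r := hr
    have hr1 : r + 1 ≠ 0 := by positivity
    have hdiv : r / (r + 1) ≠ 0 := by positivity
    exact ((continuousAt_id.div (continuousAt_id.add continuousAt_const) hr1).rpow_const
      (.inl hdiv)).continuousWithinAt
  obtain ⟨C, hC⟩ := exists_forall_pos_norm_le_mul_norm hu hcont (fun r hr ↦ (hpos r hr).ne')
    (h₀.trans (isBigO_rpow_div_add_one_rpow_nhdsGT ρ))
    (h_top.trans (isBigO_one_div_add_one_rpow_atTop ρ))
  refine ⟨C, fun r hr ↦ ?_⟩
  simpa only [Real.norm_of_nonneg (hpos r hr).le] using hC r hr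

end GlobalBounds

section PowerNonlinearity

variable {α β L : ℝ}

lemma isBigO_sub_sub_mul_sub_sq {g g' : ℝ → ℝ} {x : ℝ} (hg : ∀ᶠ y in 𝓝 x, HasDerivAt g (g' y) y)
    (hg' : DifferentiableAt ℝ g' x) :
    (fun y ↦ g y - g x - g' x * (y - x)) =O[𝓝 x] fun y ↦ (y - x) ^ 2 := by
  obtain ⟨C, hC⟩ := hg'.isBigO_sub.bound
  obtain ⟨δ, hδ, hball⟩ := Metric.eventually_nhds_iff_ball.1 (hg.and hC)
  refine .of_bound |C| ?_
  filter_upwards [Metric.ball_mem_nhds x hδ] with y hy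
  have hsegment : uIcc x y ⊆ Metric.ball x δ :=
    (convex_ball x δ).ordConnected.uIcc_subset (Metric.mem_ball_self hδ) hy
  have hderiv : ∀ z ∈ uIcc x y,
      HasDerivWithinAt (fun z ↦ g z - g' x * (z - x)) (g' z - g' x) (uIcc x y) z := by
    intro z hz
    refine (((hball z (hsegment hz)).1.sub
      (((hasDerivAt_id z).sub_const x).const_mul (g' x))).congr_deriv ?_).hasDerivWithinAt
    rw [mul_one]
  have hbound : ∀ z ∈ uIcc x y, ‖g' z - g' x‖ ≤ |C| * ‖y - x‖ := by
    intro z hz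
    calc ‖g' z - g' x‖ ≤ C * ‖z - x‖ := (hball z (hsegment hz)).2
      _ ≤ |C| * ‖y - x‖ := by
        gcongr
        · exact le_abs_self C
        · exact abs_sub_left_of_mem_uIcc hz
  have hmvt := (convex_uIcc x y).norm_image_sub_le_of_norm_hasDerivWithin_le hderiv hbound
    left_mem_uIcc right_mem_uIcc
  calc ‖g y - g x - g' x * (y - x)‖
      = ‖g y - g' x * (y - x) - (g x - g' x * (x - x))‖ := by ring_nf
    _ ≤ |C| * ‖y - x‖ * ‖y - x‖ := hmvt
    _ = |C| * ‖(y - x) ^ 2‖ := by rw [norm_pow]; ring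

lemma isBigO_abs_rpow_mul_sub_linearization (hL : 0 < L) :
    (fun x ↦ |x| ^ α * x - L ^ α * L - (α + 1) * L ^ α * (x - L)) =O[𝓝 L]
      fun x ↦ (x - L) ^ 2 := by
  have hderiv : ∀ᶠ x in 𝓝 L,
      HasDerivAt (fun x : ℝ ↦ |x| ^ α * x) ((α + 1) * x ^ α) x := by
    filter_upwards [Ioi_mem_nhds hL] with x hx
    have hpow : HasDerivAt (fun x : ℝ ↦ x ^ (α + 1)) ((α + 1) * x ^ α) x := by
      simpa using Real.hasDerivAt_rpow_const (p := α + 1) (.inl hx.ne')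
    refine hpow.congr_of_eventuallyEq ?_
    filter_upwards [Ioi_mem_nhds hx] with y hy
    rw [abs_of_pos hy, Real.rpow_add_one hy.ne']
  have hdiff : DifferentiableAt ℝ (fun x : ℝ ↦ (α + 1) * x ^ α) L :=
    (Real.differentiableAt_rpow_const_of_ne α hL.ne').const_mul _
  simpa only [abs_of_pos hL] using isBigO_sub_sub_mul_sub_sq hderiv hdiff

/-- The potential `Φ` of the power nonlinearity, `Φ' x = |x| ^ α * x - β * x`. -/
def powerPotential (α β x : ℝ) : ℝ := |x| ^ (α + 2) / (α + 2) - β * x ^ 2 / 2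

lemma hasDerivAt_powerPotential (hα : -1 < α) (x : ℝ) :
    HasDerivAt (powerPotential α β) (|x| ^ α * x - β * x) x := by
  have hα2 : α + 2 ≠ 0 := by linarith
  refine (((hasDerivAt_abs_rpow x (by linarith : 1 < α + 2)).div_const (α + 2)).sub
    ((((hasDerivAt_id x).pow 2).const_mul β).div_const 2)).congr_deriv ?_
  rw [add_sub_cancel_right]
  simp only [id]
  field_simp
  push_cast
  ring

lemma tendsto_powerPotential_cobounded_atTop (hα : 0 < α) :
    Tendsto (powerPotential α β) (cobounded ℝ) atTop := by
  have hα2 : 0 < α + 2 := by positivity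
  have hfactor : Tendsto (fun y : ℝ ↦ y ^ 2 * (y ^ α / (α + 2) - β / 2)) atTop atTop :=
    (tendsto_pow_atTop two_ne_zero).atTop_mul_atTop₀
      (tendsto_atTop_add_const_right _ _ ((tendsto_rpow_atTop hα).atTop_div_const hα2))
  have habs : Tendsto (fun x : ℝ ↦ |x|) (cobounded ℝ) atTop := tendsto_norm_cobounded_atTop
  refine (hfactor.comp habs).congr' ?_
  filter_upwards [habs.eventually_gt_atTop 0] with x hx
  rw [powerPotential, Function.comp_apply, Real.rpow_add hx, Real.rpow_two, sq_abs]
  ring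

end PowerNonlinearity

section EmdenFowler

/-- The first-order system `r * w' = q`, `r * q' = (A - r ^ 2 / 2) * q - (|w| ^ α * w - β * w)` on
`(0, ∞)` satisfied by the Emden–Fowler variables of a self-similar profile. -/
structure IsEmdenFowlerSolution (A α β : ℝ) (w q : ℝ → ℝ) : Prop where
  hasDerivAt_fst : ∀ r > 0, HasDerivAt w (q r / r) r
  hasDerivAt_snd : ∀ r > 0,
    HasDerivAt q (((A - r ^ 2 / 2) * q r - (|w r| ^ α * w r - β * w r)) / r) r

namespace IsEmdenFowlerSolution

variable {A α β L κ₁ κ₂ : ℝ} {w q : ℝ → ℝ}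

lemma continuousOn_fst (h : IsEmdenFowlerSolution A α β w q) : ContinuousOn w (Ioi 0) :=
  fun r hr ↦ (h.hasDerivAt_fst r hr).continuousAt.continuousWithinAt

theorem isBigO_one_atTop (h : IsEmdenFowlerSolution A α β w q) (hα : 0 < α) :
    w =O[atTop] fun _ ↦ (1 : ℝ) := by
  have hdamping : ∀ᶠ r : ℝ in atTop, A - r ^ 2 / 2 ≤ 0 := by
    filter_upwards [(tendsto_pow_atTop two_ne_zero).eventually_ge_atTop (2 * A)] with r hr
    linarith
  exact isBigO_one_atTop_of_damped (hasDerivAt_powerPotential (by linarith))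
    (tendsto_powerPotential_cobounded_atTop hα) hdamping
    ((eventually_gt_atTop 0).mono h.hasDerivAt_fst) ((eventually_gt_atTop 0).mono h.hasDerivAt_snd)

theorem isBigO_sub_nhdsGT (h : IsEmdenFowlerSolution A α β w q) (hL : 0 < L) (hLβ : L ^ α = β)
    (hκ₁ : 0 < κ₁) (hκ : κ₁ < κ₂) (hsum : κ₁ + κ₂ = A) (hprod : κ₁ * κ₂ = α * β)
    (hw : Tendsto w (𝓝[>] 0) (𝓝 L)) :
    (fun r ↦ w r - L) =O[𝓝[>] 0] fun r ↦ r ^ κ₁ := by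
  have hpos : ∀ᶠ r : ℝ in 𝓝[>] 0, 0 < r := self_mem_nhdsWithin
  set remainder : ℝ → ℝ := fun r ↦ |w r| ^ α * w r - L ^ α * L - (α + 1) * L ^ α * (w r - L)
  have hpow {r : ℝ} (hr : 0 < r) : 0 ≤ r ^ (2 : ℝ) := Real.rpow_nonneg hr.le _
  have hnorm {r : ℝ} (hr : 0 < r) : ‖(r ^ (2 : ℝ) + |w r - L|) * (|w r - L| + |q r|)‖ =
      (r ^ (2 : ℝ) + |w r - L|) * (|w r - L| + |q r|) :=
    Real.norm_of_nonneg (by positivity)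
  have hremainder : remainder =O[𝓝[>] 0]
      fun r ↦ (r ^ (2 : ℝ) + |w r - L|) * (|w r - L| + |q r|) := by
    refine ((isBigO_abs_rpow_mul_sub_linearization hL).comp_tendsto hw).trans ?_
    refine .of_bound' (hpos.mono fun r hr ↦ ?_)
    rw [Function.comp_apply, hnorm hr, norm_pow, Real.norm_eq_abs, sq]
    gcongr
    · exact le_add_of_nonneg_left (hpow hr)
    · exact le_add_of_nonneg_right (abs_nonneg _)
  have hdamping : (fun r ↦ r ^ 2 / 2 * q r) =O[𝓝[>] 0]
      fun r ↦ (r ^ (2 : ℝ) + |w r - L|) * (|w r - L| + |q r|) := by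
    refine .of_bound' (hpos.mono fun r hr ↦ ?_)
    rw [hnorm hr, norm_mul, Real.norm_of_nonneg (by positivity : 0 ≤ r ^ 2 / 2),
      Real.norm_eq_abs, Real.rpow_two]
    gcongr
    · linarith [sq_nonneg r, abs_nonneg (w r - L)]
    · exact le_add_of_nonneg_left (abs_nonneg _)
  refine isBigO_rpow_of_perturbed_euler (h := fun r ↦ -(r ^ 2 / 2 * q r) - remainder r) hκ₁ hκ
    two_pos ?_ ?_ (hdamping.neg_left.sub hremainder) (by simpa using hw.sub_const L)
  · exact hpos.mono fun r hr ↦ (h.hasDerivAt_fst r hr).sub_const L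
  · refine hpos.mono fun r hr ↦ (h.hasDerivAt_snd r hr).congr_deriv ?_
    simp only [remainder]
    rw [hsum, hprod, hLβ]
    ring

theorem exists_abs_sub_le (h : IsEmdenFowlerSolution A α β w q) (hα : 0 < α) (hL : 0 < L)
    (hLβ : L ^ α = β) (hκ₁ : 0 < κ₁) (hκ : κ₁ < κ₂) (hsum : κ₁ + κ₂ = A)
    (hprod : κ₁ * κ₂ = α * β) (hw : Tendsto w (𝓝[>] 0) (𝓝 L)) :
    ∃ C, ∀ r > 0, |w r - L| ≤ C * (r / (r + 1)) ^ κ₁ :=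
  exists_forall_pos_norm_le_mul_div_add_one_rpow (h.continuousOn_fst.sub continuousOn_const)
    (h.isBigO_sub_nhdsGT hL hLβ hκ₁ hκ hsum hprod hw)
    ((h.isBigO_one_atTop hα).sub (isBigO_const_const L one_ne_zero _))

end IsEmdenFowlerSolution

theorem isEmdenFowlerSolution_of_profile {d α : ℝ} {f : ℝ → ℝ} (hα : α ≠ 0)
    (hf : ContDiffOn ℝ 2 f (Ioi 0))
    (hode : ∀ r : ℝ, 0 < r →
      deriv (deriv f) r + ((d - 1) / r + r / 2) * deriv f r + f r / α + |f r| ^ α * f r = 0) :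
    IsEmdenFowlerSolution (2 * (2 / α) - (d - 2)) α (2 / α * (d - 2 - 2 / α))
      (fun r ↦ r ^ (2 / α) * f r) (fun r ↦ r ^ (2 / α) * (2 / α * f r + r * deriv f r)) := by
  have hf' : ∀ r > 0, HasDerivAt f (deriv f r) r := fun r hr ↦
    ((hf.contDiffAt (Ioi_mem_nhds hr)).differentiableAt two_ne_zero).hasDerivAt
  have hf'' : ∀ r > 0, HasDerivAt (deriv f) (deriv (deriv f) r) r := fun r hr ↦
    (((hf.deriv_of_isOpen (m := 1) isOpen_Ioi (by norm_num)).contDiffAt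
      (Ioi_mem_nhds hr)).differentiableAt one_ne_zero).hasDerivAt
  have hpow : ∀ r > (0 : ℝ),
      HasDerivAt (fun r : ℝ ↦ r ^ (2 / α)) (2 / α * (r ^ (2 / α) / r)) r := by
    intro r hr
    simpa only [Real.rpow_sub_one hr.ne'] using
      Real.hasDerivAt_rpow_const (p := 2 / α) (Or.inl hr.ne')
  refine ⟨fun r hr ↦ ((hpow r hr).mul (hf' r hr)).congr_deriv (by field_simp), fun r hr ↦ ?_⟩
  refine ((hpow r hr).mul (((hf' r hr).const_mul (2 / α)).add
    ((hasDerivAt_id r).mul (hf'' r hr)))).congr_deriv ?_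
  have hscale : |r ^ (2 / α) * f r| ^ α = r ^ 2 * |f r| ^ α := by
    rw [abs_mul, Real.abs_rpow_of_nonneg hr.le, abs_of_pos hr,
      Real.mul_rpow (by positivity) (abs_nonneg _), ← Real.rpow_mul hr.le,
      div_mul_cancel₀ _ hα, Real.rpow_two]
  have hnonlin : |f r| ^ α * f r =
      -(deriv (deriv f) r + ((d - 1) / r + r / 2) * deriv f r + f r / α) := by
    linarith [hode r hr]
  have hscaled : |r ^ (2 / α) * f r| ^ α * (r ^ (2 / α) * f r) =
      r ^ (2 / α) * r ^ 2 * (|f r| ^ α * f r) := by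
    rw [hscale]
    ring
  rw [hscaled, hnonlin]
  simp only [Pi.add_apply, Pi.mul_apply, id]
  field_simp
  ring

end EmdenFowler

section Exponents

variable {d α β ρ : ℝ}

lemma lt_two_div_of_lt_four_div (hd : 2 < d) (hα : 0 < α)
    (hα₀ : α < 4 / (d - 4 + 2 * √(d - 1))) : (d - 4) / 2 + √(d - 1) < 2 / α := by
  have hsqrt : 1 < √(d - 1) := Real.lt_sqrt_of_sq_lt (by linarith)
  rw [lt_div_iff₀ (by linarith)] at hα₀
  rw [lt_div_iff₀ hα]
  linarith

lemma discriminant_pos (hd : 2 < d) (hα : 0 < α) (hα₀ : α < 4 / (d - 4 + 2 * √(d - 1)))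
    (hβ : β = 2 / α * (d - 2 - 2 / α)) : 0 < (d - 2) ^ 2 / 4 - β * (α + 1) := by
  have hm := lt_two_div_of_lt_four_div hd hα hα₀
  have hsqrt : √(d - 1) ^ 2 = d - 1 := Real.sq_sqrt (by linarith)
  have hdisc : (d - 2) ^ 2 / 4 - β * (α + 1) = (2 / α - (d - 4) / 2) ^ 2 - √(d - 1) ^ 2 := by
    rw [hsqrt, hβ]
    field_simp
    ring
  rw [hdisc, sub_pos]
  exact pow_lt_pow_left₀ (by linarith) (Real.sqrt_nonneg _) two_ne_zero

lemma exists_larger_indicial_root (hd : 2 < d) (hα : 0 < α) (hα₀ : α < 4 / (d - 4 + 2 * √(d - 1)))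
    (hβ : β = 2 / α * (d - 2 - 2 / α)) (hβ₀ : 0 < β)
    (hρ : ρ = 2 / α - (d - 2) / 2 - √((d - 2) ^ 2 / 4 - β * (α + 1))) :
    ∃ κ, 0 < ρ ∧ ρ < κ ∧ ρ + κ = 2 * (2 / α) - (d - 2) ∧ ρ * κ = α * β := by
  have hm := lt_two_div_of_lt_four_div hd hα hα₀
  have hsqrt : 1 < √(d - 1) := Real.lt_sqrt_of_sq_lt (by linarith)
  have hdisc := discriminant_pos hd hα hα₀ hβ
  set s := √((d - 2) ^ 2 / 4 - β * (α + 1))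
  have hs : 0 < s := Real.sqrt_pos.2 hdisc
  have hs_sq : s ^ 2 = (d - 2) ^ 2 / 4 - β * (α + 1) := Real.sq_sqrt hdisc.le
  have hprod : ρ * (ρ + 2 * s) = α * β := by
    have hvieta : ρ * (ρ + 2 * s) = (2 / α - (d - 2) / 2) ^ 2 - s ^ 2 := by
      rw [hρ]
      ring
    rw [hvieta, hs_sq]
    linear_combination hβ
  have hκ : 0 < ρ + 2 * s := by linarith
  exact ⟨ρ + 2 * s, pos_of_mul_pos_left (hprod ▸ mul_pos hα hβ₀) hκ.le, by linarith,
    by rw [hρ]; ring, hprod⟩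

end Exponents

lemma rpow_mul_selfSimilar {α R t : ℝ} (hR : 0 ≤ R) (ht : 0 ≤ t) (f : ℝ → ℝ) :
    R ^ (2 / α) * (t ^ (-(1 / α)) * f (R / √t)) = (R / √t) ^ (2 / α) * f (R / √t) := by
  rw [Real.div_rpow hR (Real.sqrt_nonneg t), Real.sqrt_eq_rpow, ← Real.rpow_mul ht,
    Real.rpow_neg ht, ← mul_assoc, ← div_eq_mul_inv]
  ring_nf

theorem stmt_19_general {E : Type*} [NormedAddCommGroup E] {d α β ρ : ℝ} (hd : 2 < d)
    (hα : 2 / (d - 2) < α) (hα₀ : α < 4 / (d - 4 + 2 * √(d - 1)))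
    (hβ : β = 2 / α * (d - 2 - 2 / α))
    (hρ : ρ = 2 / α - (d - 2) / 2 - √((d - 2) ^ 2 / 4 - β * (α + 1)))
    {f : ℝ → ℝ} (hf : ContDiffOn ℝ 2 f (Ioi 0))
    (hode : ∀ r : ℝ, 0 < r →
      deriv (deriv f) r + ((d - 1) / r + r / 2) * deriv f r + f r / α + |f r| ^ α * f r = 0)
    (hsing : Tendsto (fun r : ℝ ↦ r ^ (2 / α) * f r) (𝓝[>] 0) (𝓝 (β ^ (1 / α)))) :
    ∃ C : ℝ, ∀ t : ℝ, 0 < t → ∀ x : E, x ≠ 0 →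
      |‖x‖ ^ (2 / α) * (t ^ (-(1 / α)) * f (‖x‖ / √t)) - β ^ (1 / α)| ≤
        C * (‖x‖ / (‖x‖ + √t)) ^ ρ := by
  have hd' : 0 < d - 2 := sub_pos.2 hd
  have hα_pos : 0 < α := (div_pos two_pos hd').trans hα
  have hβ_pos : 0 < β := by
    rw [hβ]
    exact mul_pos (div_pos two_pos hα_pos) (sub_pos.2 ((div_lt_comm₀ hd' hα_pos).1 hα))
  have hL : (β ^ (1 / α)) ^ α = β := by
    rw [← Real.rpow_mul hβ_pos.le, one_div_mul_cancel hα_pos.ne', Real.rpow_one]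
  obtain ⟨κ, hρ_pos, hρκ, hsum, hprod⟩ := exists_larger_indicial_root hd hα_pos hα₀ hβ hβ_pos hρ
  obtain ⟨C, hC⟩ := (hβ ▸ isEmdenFowlerSolution_of_profile hα_pos.ne' hf hode).exists_abs_sub_le
    hα_pos (Real.rpow_pos_of_pos hβ_pos _) hL hρ_pos hρκ hsum hprod hsing
  refine ⟨C, fun t ht x hx ↦ ?_⟩
  have hx' : 0 < ‖x‖ := norm_pos_iff.2 hx
  have hratio : ‖x‖ / √t / (‖x‖ / √t + 1) = ‖x‖ / (‖x‖ + √t) := by field_simp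
  rw [rpow_mul_selfSimilar hx'.le ht.le, ← hratio]
  exact hC (‖x‖ / √t) (by positivity)

theorem stmt_19 (N : ℕ) (hN : 3 ≤ N) (α α₀ β ρ : ℝ)
    (hα₀ : α₀ = 4 / ((N : ℝ) - 4 + 2 * Real.sqrt ((N : ℝ) - 1)))
    (hα1 : 2 / ((N : ℝ) - 2) < α) (hα2 : α < α₀)
    (hβ : β = 2 / α * ((N : ℝ) - 2 - 2 / α))
    (hρ : ρ = 2 / α - ((N : ℝ) - 2) / 2 - Real.sqrt (((N : ℝ) - 2) ^ 2 / 4 - β * (α + 1)))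
    (f : ℝ → ℝ) (hfC2 : ContDiffOn ℝ 2 f (Set.Ioi 0))
    (hfode : ∀ r : ℝ, 0 < r →
      deriv (deriv f) r + (((N : ℝ) - 1) / r + r / 2) * deriv f r + f r / α
        + |f r| ^ α * f r = 0)
    (hfsing : Tendsto (fun r : ℝ => r ^ (2 / α) * f r)
      (nhdsWithin 0 (Set.Ioi 0)) (nhds (β ^ (1 / α)))) :
    ∃ C : ℝ, ∀ t : ℝ, 0 < t → ∀ x : Euc N, x ≠ 0 →
      |‖x‖ ^ (2 / α) * (t ^ (-(1 / α)) * f (‖x‖ / Real.sqrt t)) - β ^ (1 / α)| ≤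
        C * (‖x‖ / (‖x‖ + Real.sqrt t)) ^ ρ :=
  stmt_19_general (Nat.ofNat_lt_cast.2 hN) hα1 (hα₀ ▸ hα2) hβ hρ hfC2 hfode hfsing

end
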